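/- Let d ≥ 1 and C ≥ 2 be integers and let b, m, T, k_1, k_2, γ > 0 be reals. Suppose σ_a² = bγ, T ≥ b C^{3/2} k_1 / m, and T ≥ C^{1/2} k_2. Then exp{ −σ_a² (b/m) / ( (T/C + b/m)(T/C + 2b/m) ) } · [ 1 + (Cb/(Tm))² / (1 + 2Cb/(Tm)) ]^{−(C−1)d/2} ≥ exp{ −bγ/(k_1 k_2) − d/(2k_1²) }. -/

import Mathlib

/-!
In the variables `u = b / m`, `t = T / C` and `s = √C`, the two conditions on `T` become
`u * s * k₁ ≤ t` and `k₂ ≤ s * t`. Multiplying them gives `u * (k₁ * k₂) ≤ t ^ 2`, which controls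
the exponential factor. The first one alone gives `C * (u / t) ^ 2 ≤ 1 / k₁ ^ 2`, which controls
the power factor through `1 + y ≤ exp y`.
-/

lemma mul_mul_le_sq_of_le_of_le {s t u k₁ k₂ : ℝ} (ht : 0 ≤ t) (hu : 0 ≤ u) (hk₁ : 0 ≤ k₁)
    (h₁ : u * s * k₁ ≤ t) (h₂ : k₂ ≤ s * t) : u * (k₁ * k₂) ≤ t ^ 2 :=
  calc
    u * (k₁ * k₂) ≤ u * (k₁ * (s * t)) := by gcongr
    _ = u * s * k₁ * t := by ring
    _ ≤ t * t := by gcongr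
    _ = t ^ 2 := (sq t).symm

lemma div_add_mul_add_le_one_div {t u k : ℝ} (ht : 0 < t) (hu : 0 ≤ u) (hk : 0 < k)
    (h : u * k ≤ t ^ 2) : u / ((t + u) * (t + 2 * u)) ≤ 1 / k := by
  rw [div_le_div_iff₀ (by positivity) hk, one_mul]
  calc
    u * k ≤ t * t := h.trans_eq (sq t)
    _ ≤ (t + u) * (t + 2 * u) := by gcongr <;> linarith

lemma mul_div_two_mul_div_sq_le_div {c d t u k : ℝ} (hc : 0 ≤ c) (hd : 0 ≤ d) (ht : 0 < t)
    (hu : 0 ≤ u) (hk : 0 < k) (h : u * √c * k ≤ t) : c * d / 2 * (u / t) ^ 2 ≤ d / (2 * k ^ 2) := by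
  have sqrt_mul_ratio_le : √c * (u / t) ≤ 1 / k := by
    rw [le_div_iff₀ hk, mul_div_assoc', div_mul_eq_mul_div, div_le_one ht]
    linarith
  calc
    c * d / 2 * (u / t) ^ 2 = d / 2 * (√c * (u / t)) ^ 2 := by
      rw [mul_pow, Real.sq_sqrt hc]; ring
    _ ≤ d / 2 * (1 / k) ^ 2 := by gcongr
    _ = d / (2 * k ^ 2) := by ring

lemma exp_neg_mul_le_one_add_rpow_neg {y p : ℝ} (hy : -1 < y) (hp : 0 ≤ p) :
    Real.exp (-(p * y)) ≤ (1 + y) ^ (-p) := by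
  have one_add_pos : 0 < 1 + y := by linarith
  calc
    Real.exp (-(p * y)) = Real.exp y ^ (-p) := by rw [← Real.exp_mul]; ring_nf
    _ ≤ (1 + y) ^ (-p) := Real.rpow_le_rpow_of_nonpos one_add_pos
      (by linarith [Real.add_one_le_exp y]) (neg_nonpos.2 hp)

lemma exp_neg_mul_sq_le_one_add_sq_div_rpow_neg {x p q : ℝ} (hx : 0 ≤ x) (hq : 0 ≤ q)
    (hpq : p ≤ q) : Real.exp (-(q * x ^ 2)) ≤ (1 + x ^ 2 / (1 + 2 * x)) ^ (-p) := by
  have ratio_nonneg : 0 ≤ x ^ 2 / (1 + 2 * x) := by positivity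
  calc
    Real.exp (-(q * x ^ 2)) ≤ Real.exp (-(q * (x ^ 2 / (1 + 2 * x)))) := by
      gcongr
      exact div_le_self (sq_nonneg x) (by linarith)
    _ ≤ (1 + x ^ 2 / (1 + 2 * x)) ^ (-q) :=
      exp_neg_mul_le_one_add_rpow_neg (by linarith) hq
    _ ≤ (1 + x ^ 2 / (1 + 2 * x)) ^ (-p) :=
      Real.rpow_le_rpow_of_exponent_le (by linarith) (neg_le_neg hpq)

lemma exp_neg_sub_le_exp_neg_mul_rpow_neg {c d t u k₁ k₂ σ : ℝ} (hc : 0 ≤ c) (hd : 0 ≤ d)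
    (ht : 0 < t) (hu : 0 ≤ u) (hk₁ : 0 < k₁) (hk₂ : 0 < k₂) (hσ : 0 ≤ σ)
    (h₁ : u * √c * k₁ ≤ t) (h₂ : k₂ ≤ √c * t) :
    Real.exp (-(σ / (k₁ * k₂)) - d / (2 * k₁ ^ 2)) ≤
      Real.exp (-(σ * u / ((t + u) * (t + 2 * u)))) *
        (1 + (u / t) ^ 2 / (1 + 2 * (u / t))) ^ (-((c - 1) * d / 2)) := by
  have exponential_bound : σ * u / ((t + u) * (t + 2 * u)) ≤ σ / (k₁ * k₂) := by
    rw [mul_div_assoc, ← mul_one_div σ (k₁ * k₂)]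
    exact mul_le_mul_of_nonneg_left (div_add_mul_add_le_one_div ht hu (by positivity)
      (mul_mul_le_sq_of_le_of_le ht.le hu hk₁.le h₁ h₂)) hσ
  have power_bound : Real.exp (-(d / (2 * k₁ ^ 2))) ≤
      (1 + (u / t) ^ 2 / (1 + 2 * (u / t))) ^ (-((c - 1) * d / 2)) :=
    (Real.exp_le_exp.2 (neg_le_neg (mul_div_two_mul_div_sq_le_div hc hd ht hu hk₁ h₁))).trans
      (exp_neg_mul_sq_le_one_add_sq_div_rpow_neg (by positivity) (by positivity)
        (by linarith))
  rw [sub_eq_add_neg, Real.exp_add]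
  gcongr

lemma rpow_three_halves_eq_mul_sqrt {c : ℝ} (hc : 0 ≤ c) : c ^ ((3 : ℝ) / 2) = c * √c := by
  rw [Real.sqrt_eq_rpow, ← Real.rpow_one_add' hc (by norm_num)]
  norm_num

theorem statement11_general {c d b m T k₁ k₂ σa2 : ℝ} (hc : 0 < c) (hd : 0 ≤ d) (hb : 0 ≤ b)
    (hm : 0 < m) (hk₁ : 0 < k₁) (hk₂ : 0 < k₂) (hσ : 0 ≤ σa2)
    (hT2 : b * c ^ ((3 : ℝ) / 2) * k₁ / m ≤ T) (hT3 : c ^ ((1 : ℝ) / 2) * k₂ ≤ T) :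
    Real.exp (-(σa2 / (k₁ * k₂)) - d / (2 * k₁ ^ 2)) ≤
      Real.exp (-(σa2 * (b / m) / ((T / c + b / m) * (T / c + 2 * b / m)))) *
        (1 + (c * b / (T * m)) ^ 2 / (1 + 2 * c * b / (T * m))) ^ (-((c - 1) * d / 2)) := by
  have T_pos : 0 < T := lt_of_lt_of_le (by positivity) hT3
  rw [rpow_three_halves_eq_mul_sqrt hc.le] at hT2
  rw [← Real.sqrt_eq_rpow] at hT3
  have h₁ : b / m * √c * k₁ ≤ T / c := by
    rw [le_div_iff₀ hc]
    exact le_of_eq_of_le (by ring) hT2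
  have h₂ : k₂ ≤ √c * (T / c) := by
    rw [mul_div_assoc', le_div_iff₀ hc]
    calc
      k₂ * c = √c * (√c * k₂) := by rw [← mul_assoc, Real.mul_self_sqrt hc.le, mul_comm]
      _ ≤ √c * T := by gcongr
  have ratio_eq : c * b / (T * m) = b / m / (T / c) := by field_simp
  rw [mul_div_assoc 2 b m, mul_assoc 2 c b, mul_div_assoc 2 (c * b), ratio_eq]
  exact exp_neg_sub_le_exp_neg_mul_rpow_neg hc.le hd (by positivity) (by positivity) hk₁ hk₂ hσ
    h₁ h₂

/-- Corollary 12(b) of the paper: lower bound on the limiting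
`N⁻¹·CESS₀` under the super sub-posterior heterogeneity condition `SSH(γ)`,
when `T ≥ b C^{3/2} k₁ / m` and `T ≥ C^{1/2} k₂`. -/
theorem statement11 (d C : ℕ) (hd : 1 ≤ d) (hC : 2 ≤ C)
    (b m T k₁ k₂ γ σa2 : ℝ)
    (hb : 0 < b) (hm : 0 < m) (hT : 0 < T) (hk₁ : 0 < k₁) (hk₂ : 0 < k₂) (hγ : 0 < γ)
    (hσ : σa2 = b * γ)
    (hT2 : b * (C : ℝ) ^ ((3 : ℝ) / 2) * k₁ / m ≤ T)
    (hT3 : (C : ℝ) ^ ((1 : ℝ) / 2) * k₂ ≤ T) :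
    Real.exp (-(b * γ / (k₁ * k₂)) - (d : ℝ) / (2 * k₁ ^ 2)) ≤
      Real.exp (-(σa2 * (b / m) / ((T / C + b / m) * (T / C + 2 * b / m)))) *
        (1 + ((C : ℝ) * b / (T * m)) ^ 2 / (1 + 2 * (C : ℝ) * b / (T * m))) ^
          (-(((C : ℝ) - 1) * d / 2)) := by
  subst hσ
  exact statement11_general (by positivity) (by positivity) hb.le hm hk₁ hk₂ (by positivity)
    hT2 hT3
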